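/- arXiv:2002.10291 — 7 statements merged into one kernel-verified Lean document; each statement's English description precedes it below -/
import Mathlib

section
/- Linearization around a straight nominal path: specialize to β₂ᵣ = β₃ᵣ = 0 and uᵣ = 0 (so κ = 0 and Eᵣ = 1). Then the map (x̃, ũ) ↦ f̃(x̃, ũ) is differentiable at the origin, its Jacobian with respect to x̃ = (z̃₃, θ̃₃, β̃₃, β̃₂) at (0, 0) equals v̄ · A with A the 4×4 matrix with rows (0, 1, 0, 0), (0, 0, 1/L₃, 0), (0, 0, −1/L₃, 1/L₂), (0, 0, 0, −1/L₂), and its partial derivative with respect to ũ at (0, 0) equals v̄ · (0, 0, −M₁/L₂, (L₂ + M₁)/L₂). -/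
/-!
Along each coordinate axis through the origin the error model collapses to an elementary curve:
with `κ = 0` every component is a constant multiple of `tan t` or of `t`, or vanishes. Since `f` is
differentiable at the origin (all denominators there are nonzero), the columns of its Jacobian are
the velocities of these curves at `t = 0`, and `tan` has derivative `1` at `0`.
-/

/-- For a map differentiable at the origin, a directional derivative of the Fréchet derivative can be
read off from the restriction to the line `t ↦ t • v`. -/
lemma fderiv_apply_eq_of_curve {E F : Type*} [NormedAddCommGroup E] [NormedSpace ℝ E]
    [NormedAddCommGroup F] [NormedSpace ℝ F] {f : E → F} (hd : DifferentiableAt ℝ f 0) (v : E)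
    {g : ℝ → F} {w : F} (hg : HasDerivAt g w 0) (hfg : ∀ t : ℝ, f (t • v) = g t) :
    fderiv ℝ f 0 v = w := by
  rw [← hd.lineDeriv_eq_fderiv, lineDeriv]
  simpa [hfg] using hg.deriv

/-- Linearization of the spatial path-following error model around a
straight nominal path (β₂ᵣ = β₃ᵣ = 0, uᵣ = 0): the map (x̃, ũ) ↦ f̃(x̃, ũ) is
differentiable at the origin, its Jacobian w.r.t. x̃ = (z̃₃, θ̃₃, β̃₃, β̃₂) is v̄·A
with A having rows (0,1,0,0), (0,0,1/L₃,0), (0,0,−1/L₃,1/L₂), (0,0,0,−1/L₂)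
(expressed column-wise via directional derivatives along the basis directions of x̃),
and its partial derivative w.r.t. ũ is v̄·(0,0,−M₁/L₂,(L₂+M₁)/L₂). -/
theorem stmt_8
    (L2 L3 M1 vb b2r b3r ur : ℝ)
    (hL2 : 0 < L2) (hL3 : 0 < L3)
    (hvb : vb = 1 ∨ vb = -1)
    (hb2r : b2r = 0) (hb3r : b3r = 0) (hur : ur = 0)
    (C1 : ℝ → ℝ → ℝ → ℝ)
    (hC1 : ∀ β2 β3 u, C1 β2 β3 u = Real.cos β3 * (Real.cos β2 + M1 * u * Real.sin β2))
    (κ : ℝ) (hκ : κ = Real.tan b3r / L3)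
    (hcos : Real.cos b3r ≠ 0)
    (hE : Real.cos b2r + M1 * ur * Real.sin b2r ≠ 0)
    (f : (ℝ × ℝ × ℝ × ℝ) × ℝ → ℝ × ℝ × ℝ × ℝ)
    (hf : ∀ z θ β3 β2 u, f ((z, θ, β3, β2), u) =
      ( vb * ((1 - κ * z) * Real.tan θ),
        vb * ((1 - κ * z) * Real.tan (β3 + b3r) / (L3 * Real.cos θ) - κ),
        vb * ( ((1 - κ * z) / Real.cos θ) *
            ( (Real.sin (β2 + b2r) - M1 * Real.cos (β2 + b2r) * (u + ur)) /
                (L2 * C1 (β2 + b2r) (β3 + b3r) (u + ur)) -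
              Real.tan (β3 + b3r) / L3 )
          - ( (Real.sin b2r - M1 * Real.cos b2r * ur) / (L2 * C1 b2r b3r ur) - κ ) ),
        vb * ( ((1 - κ * z) / Real.cos θ) *
            ( ((u + ur) - Real.sin (β2 + b2r) / L2 +
                (M1 / L2) * Real.cos (β2 + b2r) * (u + ur)) /
              C1 (β2 + b2r) (β3 + b3r) (u + ur) )
          - ( (ur - Real.sin b2r / L2 + (M1 / L2) * Real.cos b2r * ur) /
              C1 b2r b3r ur ) ) )) :
    DifferentiableAt ℝ f ((0, 0, 0, 0), 0) ∧
    -- Jacobian w.r.t. x̃ (columns of v̄·A):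
    fderiv ℝ f ((0, 0, 0, 0), 0) ((1, 0, 0, 0), 0) = (0, 0, 0, 0) ∧
    fderiv ℝ f ((0, 0, 0, 0), 0) ((0, 1, 0, 0), 0) = (vb * 1, 0, 0, 0) ∧
    fderiv ℝ f ((0, 0, 0, 0), 0) ((0, 0, 1, 0), 0) =
      (0, vb * (1 / L3), vb * (-(1 / L3)), 0) ∧
    fderiv ℝ f ((0, 0, 0, 0), 0) ((0, 0, 0, 1), 0) =
      (0, 0, vb * (1 / L2), vb * (-(1 / L2))) ∧
    -- partial derivative w.r.t. ũ:
    fderiv ℝ f ((0, 0, 0, 0), 0) ((0, 0, 0, 0), 1) =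
      (0, 0, vb * (-(M1 / L2)), vb * ((L2 + M1) / L2)) := by
  subst hb2r hb3r hur
  have hκ0 : κ = 0 := by simp [hκ]
  subst hκ0
  have hL2n := hL2.ne'
  have hL3n := hL3.ne'
  have hfun : f = fun p =>
      ( vb * Real.tan p.1.2.1,
        vb * (Real.tan p.1.2.2.1 / (L3 * Real.cos p.1.2.1)),
        vb * ((1 / Real.cos p.1.2.1) *
          ((Real.sin p.1.2.2.2 - M1 * Real.cos p.1.2.2.2 * p.2) /
            (L2 * (Real.cos p.1.2.2.1 *
              (Real.cos p.1.2.2.2 + M1 * p.2 * Real.sin p.1.2.2.2))) -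
            Real.tan p.1.2.2.1 / L3)),
        vb * ((1 / Real.cos p.1.2.1) *
          ((p.2 - Real.sin p.1.2.2.2 / L2 + (M1 / L2) * Real.cos p.1.2.2.2 * p.2) /
            (Real.cos p.1.2.2.1 *
              (Real.cos p.1.2.2.2 + M1 * p.2 * Real.sin p.1.2.2.2)))) ) := by
    funext p
    obtain ⟨⟨z, θ, β3, β2⟩, u⟩ := p
    simp [hf, hC1]
  have hzero : (((0, 0, 0, 0), 0) : (ℝ × ℝ × ℝ × ℝ) × ℝ) = 0 := rfl
  have htan : HasDerivAt Real.tan 1 0 := by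
    simpa using Real.hasDerivAt_tan (x := 0) (by simp)
  have htan' : ∀ c : ℝ, HasDerivAt (fun t => vb * (c * Real.tan t)) (vb * c) 0 := fun c => by
    simpa using (htan.const_mul c).const_mul vb
  have hlin : ∀ c : ℝ, HasDerivAt (fun t : ℝ => vb * (c * t)) (vb * c) 0 := fun c => by
    simpa using ((hasDerivAt_id (0 : ℝ)).const_mul c).const_mul vb
  have h0 : HasDerivAt (fun _ : ℝ => (0 : ℝ)) 0 0 := hasDerivAt_const _ _
  have hd : DifferentiableAt ℝ f 0 := by
    rw [hfun]
    -- `tan` is written as `sin / cos` so that only nonvanishing denominators remain to be checked.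
    simp only [Real.tan_eq_sin_div_cos]
    fun_prop (disch := simp [hL2n, hL3n])
  rw [hzero]
  refine ⟨hd, ?_, ?_, ?_, ?_, ?_⟩
  · refine fderiv_apply_eq_of_curve hd _ (h0.prodMk (h0.prodMk (h0.prodMk h0))) fun t => ?_
    simp [hfun]
  · refine fderiv_apply_eq_of_curve hd _
      ((htan' 1).prodMk (h0.prodMk (h0.prodMk h0))) fun t => ?_
    simp [hfun]
  · refine fderiv_apply_eq_of_curve hd _
      (h0.prodMk ((htan' (1 / L3)).prodMk ((htan' (-(1 / L3))).prodMk h0))) fun t => ?_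
    simp [hfun, div_eq_inv_mul]
  · refine fderiv_apply_eq_of_curve hd _
      (h0.prodMk (h0.prodMk ((htan' (1 / L2)).prodMk (htan' (-(1 / L2)))))) fun t => ?_
    simp [hfun, Real.tan_eq_sin_div_cos]
    constructor <;> ring_nf <;> simp
  · refine fderiv_apply_eq_of_curve hd _
      (h0.prodMk (h0.prodMk ((hlin (-(M1 / L2))).prodMk (hlin ((L2 + M1) / L2))))) fun t => ?_
    simp [hfun]
    constructor
    · ring
    · left; field_simp
end

section
/- The partial derivative of the third component f̃₃ of the spatial path-following error model with respect to β̃₃, evaluated at (x̃, ũ) = (0, 0), equals v̄ · ( sin β₃ᵣ · (sin β₂ᵣ − uᵣ M₁ cos β₂ᵣ) / (L₂ cos²β₃ᵣ · Eᵣ) − 1 / (L₃ cos²β₃ᵣ) ). -/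
/-!
With the other error variables zero, `g` depends on `β3` only through a constant over
`L2 * cos (β3 + b3r) * Er` and through `tan (β3 + b3r) / L3`. Both are differentiable at `0` because
`cos b3r` and `Er` are nonzero, and the quotient rule together with `tan' = 1 / cos ^ 2` gives the
two terms of the derivative.
-/

/-- ∂f̃₃/∂β̃₃ at the origin equals
v̄·( sin β₃ᵣ (sin β₂ᵣ − uᵣ M₁ cos β₂ᵣ)/(L₂ cos²β₃ᵣ Eᵣ) − 1/(L₃ cos²β₃ᵣ) ). -/
theorem stmt_12
    (L2 L3 M1 vb b2r b3r ur : ℝ)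
    (hL2 : 0 < L2) (hL3 : 0 < L3)
    (hvb : vb = 1 ∨ vb = -1)
    (C1 : ℝ → ℝ → ℝ → ℝ)
    (hC1 : ∀ β2 β3 u, C1 β2 β3 u = Real.cos β3 * (Real.cos β2 + M1 * u * Real.sin β2))
    (κ : ℝ) (hκ : κ = Real.tan b3r / L3)
    (Er : ℝ) (hEr : Er = Real.cos b2r + M1 * ur * Real.sin b2r)
    (hcos : Real.cos b3r ≠ 0) (hE : Er ≠ 0)
    (g : ℝ → ℝ)
    -- f̃₃ as a function of β̃₃ alone, the other error variables being zero:
    (hg : ∀ β3, g β3 = vb * ( ((1 - κ * 0) / Real.cos 0) *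
        ( (Real.sin (0 + b2r) - M1 * Real.cos (0 + b2r) * (0 + ur)) /
            (L2 * C1 (0 + b2r) (β3 + b3r) (0 + ur)) -
          Real.tan (β3 + b3r) / L3 )
      - ( (Real.sin b2r - M1 * Real.cos b2r * ur) / (L2 * C1 b2r b3r ur) - κ ) )) :
    HasDerivAt g
      (vb * ( Real.sin b3r * (Real.sin b2r - ur * M1 * Real.cos b2r) /
          (L2 * (Real.cos b3r) ^ 2 * Er) - 1 / (L3 * (Real.cos b3r) ^ 2) )) 0 := by
  have hL2' : L2 ≠ 0 := hL2.ne'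
  have hL3' : L3 ≠ 0 := hL3.ne'
  have hshift : HasDerivAt (fun x : ℝ => x + b3r) 1 0 := (hasDerivAt_id 0).add_const b3r
  have hc : HasDerivAt (fun x : ℝ => Real.cos (x + b3r)) (-Real.sin b3r) 0 := by
    simpa using hshift.cos
  have ht : HasDerivAt (fun x : ℝ => Real.tan (x + b3r)) (1 / Real.cos b3r ^ 2) 0 := by
    have h := Real.hasDerivAt_tan (x := 0 + b3r) (by simpa using hcos)
    simpa [Function.comp_def] using h.comp (0 : ℝ) hshift
  -- At zero lateral and heading error the prefactor is 1, and `C1` factors as `cos (x + b3r) * Er`.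
  have hgeq : g = fun x => vb * (((Real.sin b2r - M1 * Real.cos b2r * ur) /
      (L2 * (Real.cos (x + b3r) * Er)) - Real.tan (x + b3r) / L3)
      - ((Real.sin b2r - M1 * Real.cos b2r * ur) / (L2 * C1 b2r b3r ur) - κ)) := by
    funext x
    rw [hg x, hC1 (0 + b2r) (x + b3r), hEr]
    simp
  rw [hgeq]
  have hden : L2 * (Real.cos (0 + b3r) * Er) ≠ 0 := by
    simp [hL2', hcos, hE]
  have hquot := (hasDerivAt_const (0 : ℝ) (Real.sin b2r - M1 * Real.cos b2r * ur)).fun_div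
    ((hc.mul_const Er).const_mul L2) hden
  refine (((hquot.fun_sub (ht.div_const L3)).sub_const _).const_mul vb).congr_deriv ?_
  simp only [zero_add]
  field_simp
  ring
end

section
/- The partial derivative of the third component f̃₃ of the spatial path-following error model with respect to β̃₂, evaluated at (x̃, ũ) = (0, 0), equals v̄ · (1 + uᵣ² M₁²) / (L₂ cos β₃ᵣ · Eᵣ²). -/
/-!
Write `N = sin β₂ - M₁ uᵣ cos β₂` and `E = cos β₂ + M₁ uᵣ sin β₂`. As functions of `β₂` they
satisfy `N' = E` and `E' = -N`, so `(N / E)' = (E² + N²) / E²`, and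
`E² + N² = 1 + uᵣ² M₁²` by the Pythagorean identity. The remaining terms of `f̃₃` are constant
in `β̃₂`.
-/

/-- ∂f̃₃/∂β̃₂ at the origin equals v̄·(1 + uᵣ² M₁²)/(L₂ cos β₃ᵣ Eᵣ²). -/
theorem stmt_13
    (L2 L3 M1 vb b2r b3r ur : ℝ)
    (hL2 : 0 < L2) (hL3 : 0 < L3)
    (hvb : vb = 1 ∨ vb = -1)
    (C1 : ℝ → ℝ → ℝ → ℝ)
    (hC1 : ∀ β2 β3 u, C1 β2 β3 u = Real.cos β3 * (Real.cos β2 + M1 * u * Real.sin β2))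
    (κ : ℝ) (hκ : κ = Real.tan b3r / L3)
    (Er : ℝ) (hEr : Er = Real.cos b2r + M1 * ur * Real.sin b2r)
    (hcos : Real.cos b3r ≠ 0) (hE : Er ≠ 0)
    (g : ℝ → ℝ)
    -- f̃₃ as a function of β̃₂ alone, the other error variables being zero:
    (hg : ∀ β2, g β2 = vb * ( ((1 - κ * 0) / Real.cos 0) *
        ( (Real.sin (β2 + b2r) - M1 * Real.cos (β2 + b2r) * (0 + ur)) /
            (L2 * C1 (β2 + b2r) (0 + b3r) (0 + ur)) -
          Real.tan (0 + b3r) / L3 )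
      - ( (Real.sin b2r - M1 * Real.cos b2r * ur) / (L2 * C1 b2r b3r ur) - κ ) )) :
    HasDerivAt g
      (vb * (1 + ur ^ 2 * M1 ^ 2) / (L2 * Real.cos b3r * Er ^ 2)) 0 := by
  have hs : HasDerivAt (fun x : ℝ => Real.sin (x + b2r)) (Real.cos b2r) 0 := by
    simpa using ((hasDerivAt_id (0 : ℝ)).add_const b2r).sin
  have hc : HasDerivAt (fun x : ℝ => Real.cos (x + b2r)) (-Real.sin b2r) 0 := by
    simpa using ((hasDerivAt_id (0 : ℝ)).add_const b2r).cos
  have hN : HasDerivAt (fun x : ℝ => Real.sin (x + b2r) - M1 * Real.cos (x + b2r) * ur)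
      (Real.cos b2r - M1 * (-Real.sin b2r) * ur) 0 :=
    hs.sub ((hc.const_mul M1).mul_const ur)
  have hD : HasDerivAt
      (fun x : ℝ => L2 * (Real.cos b3r * (Real.cos (x + b2r) + M1 * ur * Real.sin (x + b2r))))
      (L2 * (Real.cos b3r * (-Real.sin b2r + M1 * ur * Real.cos b2r))) 0 :=
    ((hc.add (hs.const_mul (M1 * ur))).const_mul _).const_mul L2
  have hD0 : L2 * (Real.cos b3r * (Real.cos (0 + b2r) + M1 * ur * Real.sin (0 + b2r))) ≠ 0 := by
    rw [zero_add, ← hEr]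
    exact mul_ne_zero hL2.ne' (mul_ne_zero hcos hE)
  have hfull := (((hN.div hD hD0).sub_const (Real.tan b3r / L3)).sub_const
    ((Real.sin b2r - M1 * Real.cos b2r * ur) / (L2 * C1 b2r b3r ur) - κ)).const_mul vb
  have hgeq : g = fun x => vb *
      ((Real.sin (x + b2r) - M1 * Real.cos (x + b2r) * ur) /
          (L2 * (Real.cos b3r * (Real.cos (x + b2r) + M1 * ur * Real.sin (x + b2r)))) -
        Real.tan b3r / L3 -
        ((Real.sin b2r - M1 * Real.cos b2r * ur) / (L2 * C1 b2r b3r ur) - κ)) := by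
    funext x
    rw [hg x, hC1 (x + b2r)]
    simp only [mul_zero, sub_zero, Real.cos_zero, div_one, one_mul, zero_add]
  rw [hgeq]
  refine hfull.congr_deriv ?_
  rw [zero_add, ← hEr]
  -- `E² + N² = 1 + M₁² uᵣ²`, where `N` is the numerator at the nominal point.
  have key : Er ^ 2 + (Real.sin b2r - M1 * Real.cos b2r * ur) ^ 2 = 1 + ur ^ 2 * M1 ^ 2 := by
    rw [hEr]
    linear_combination (1 + ur ^ 2 * M1 ^ 2) * Real.sin_sq_add_cos_sq b2r
  have hE' : Real.cos b2r - M1 * (-Real.sin b2r) * ur = Er := by rw [hEr]; ring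
  rw [hE', ← key]
  have hL2' := hL2.ne'
  field_simp
  ring
end

section
/- The partial derivative of the fourth component f̃₄ of the spatial path-following error model with respect to z̃₃, evaluated at (x̃, ũ) = (0, 0), equals −v̄ · (tan β₃ᵣ / (L₂ L₃)) · (uᵣ L₂ − sin β₂ᵣ + M₁ cos β₂ᵣ · uᵣ) / (cos β₃ᵣ · Eᵣ). -/
/-- ∂f̃₄/∂z̃₃ at the origin equals
−v̄·(tan β₃ᵣ/(L₂ L₃))·(uᵣ L₂ − sin β₂ᵣ + M₁ cos β₂ᵣ uᵣ)/(cos β₃ᵣ Eᵣ). -/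
theorem stmt_14
    (L2 L3 M1 vb b2r b3r ur : ℝ)
    (hL2 : 0 < L2) (hL3 : 0 < L3)
    (hvb : vb = 1 ∨ vb = -1)
    (C1 : ℝ → ℝ → ℝ → ℝ)
    (hC1 : ∀ β2 β3 u, C1 β2 β3 u = Real.cos β3 * (Real.cos β2 + M1 * u * Real.sin β2))
    (κ : ℝ) (hκ : κ = Real.tan b3r / L3)
    (Er : ℝ) (hEr : Er = Real.cos b2r + M1 * ur * Real.sin b2r)
    (hcos : Real.cos b3r ≠ 0) (hE : Er ≠ 0)
    (g : ℝ → ℝ)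
    -- f̃₄ as a function of z̃₃ alone, the other error variables being zero:
    (hg : ∀ z, g z = vb * ( ((1 - κ * z) / Real.cos 0) *
        ( ((0 + ur) - Real.sin (0 + b2r) / L2 +
            (M1 / L2) * Real.cos (0 + b2r) * (0 + ur)) /
          C1 (0 + b2r) (0 + b3r) (0 + ur) )
      - ( (ur - Real.sin b2r / L2 + (M1 / L2) * Real.cos b2r * ur) /
          C1 b2r b3r ur ) )) :
    HasDerivAt g
      (-vb * (Real.tan b3r / (L2 * L3)) *
        ((ur * L2 - Real.sin b2r + M1 * Real.cos b2r * ur) /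
          (Real.cos b3r * Er))) 0 := by
  have hL2ne : L2 ≠ 0 := ne_of_gt hL2
  have hL3ne : L3 ≠ 0 := ne_of_gt hL3
  -- At zero remaining error, `g` is affine in `z` with slope `-vb * κ * A`, where `A` is the
  -- nominal value of the quotient subtracted in `g`.
  have hgeq : g = fun z => vb * ((1 - κ * z) *
        ((ur - Real.sin b2r / L2 + (M1 / L2) * Real.cos b2r * ur) / (Real.cos b3r * Er))
      - (ur - Real.sin b2r / L2 + (M1 / L2) * Real.cos b2r * ur) / (Real.cos b3r * Er)) := by
    funext z
    rw [hg z]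
    simp only [zero_add, Real.cos_zero, div_one, hC1, ← hEr]
  rw [hgeq]
  have h := (((((hasDerivAt_id (0 : ℝ)).const_mul κ).const_sub 1).mul_const
    ((ur - Real.sin b2r / L2 + (M1 / L2) * Real.cos b2r * ur) / (Real.cos b3r * Er))).sub_const
    ((ur - Real.sin b2r / L2 + (M1 / L2) * Real.cos b2r * ur) / (Real.cos b3r * Er))).const_mul vb
  refine h.congr_deriv ?_
  rw [hκ]
  generalize Real.tan b3r = t
  field_simp
end

section
/- The partial derivative of the fourth component f̃₄ of the spatial path-following error model with respect to β̃₃, evaluated at (x̃, ũ) = (0, 0), equals v̄ · (tan β₃ᵣ / L₂) · (uᵣ L₂ + uᵣ M₁ cos β₂ᵣ − sin β₂ᵣ) / (cos β₃ᵣ · Eᵣ). -/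
/-!
With the other error variables at zero, the function is
`vb * (N / (cos (β3 + b3r) * Er) - const)` with `N` and `Er` independent of `β3`, so its derivative
at `0` is `vb * N * sin b3r / (cos b3r ^ 2 * Er)` by the quotient rule. The stated form follows from
`L2 * N = ur * L2 + ur * M1 * cos b2r - sin b2r` and `tan = sin / cos`.
-/

/-- ∂f̃₄/∂β̃₃ at the origin equals
v̄·(tan β₃ᵣ/L₂)·(uᵣ L₂ + uᵣ M₁ cos β₂ᵣ − sin β₂ᵣ)/(cos β₃ᵣ Eᵣ). -/
theorem stmt_15
    (L2 L3 M1 vb b2r b3r ur : ℝ)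
    (hL2 : 0 < L2) (hL3 : 0 < L3)
    (hvb : vb = 1 ∨ vb = -1)
    (C1 : ℝ → ℝ → ℝ → ℝ)
    (hC1 : ∀ β2 β3 u, C1 β2 β3 u = Real.cos β3 * (Real.cos β2 + M1 * u * Real.sin β2))
    (κ : ℝ) (hκ : κ = Real.tan b3r / L3)
    (Er : ℝ) (hEr : Er = Real.cos b2r + M1 * ur * Real.sin b2r)
    (hcos : Real.cos b3r ≠ 0) (hE : Er ≠ 0)
    (g : ℝ → ℝ)
    -- f̃₄ as a function of β̃₃ alone, the other error variables being zero:
    (hg : ∀ β3, g β3 = vb * ( ((1 - κ * 0) / Real.cos 0) *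
        ( ((0 + ur) - Real.sin (0 + b2r) / L2 +
            (M1 / L2) * Real.cos (0 + b2r) * (0 + ur)) /
          C1 (0 + b2r) (β3 + b3r) (0 + ur) )
      - ( (ur - Real.sin b2r / L2 + (M1 / L2) * Real.cos b2r * ur) /
          C1 b2r b3r ur ) )) :
    HasDerivAt g
      (vb * (Real.tan b3r / L2) *
        ((ur * L2 + ur * M1 * Real.cos b2r - Real.sin b2r) /
          (Real.cos b3r * Er))) 0 := by
  -- `N` is the numerator of the fraction, which does not depend on `β3`.
  set N : ℝ := ur - Real.sin b2r / L2 + (M1 / L2) * Real.cos b2r * ur with hN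
  have hgN : g = fun β3 => vb * (N / (Real.cos (β3 + b3r) * Er) - N / (Real.cos b3r * Er)) := by
    funext β3
    simp only [hg, hC1, hEr, zero_add, mul_zero, sub_zero, Real.cos_zero, div_one, one_mul, hN]
  have hcosDeriv : HasDerivAt (fun β3 : ℝ => Real.cos (β3 + b3r) * Er)
      (-Real.sin (0 + b3r) * 1 * Er) 0 :=
    (((hasDerivAt_id (0 : ℝ)).add_const b3r).cos).mul_const Er
  have hden : Real.cos (0 + b3r) * Er ≠ 0 := by
    rw [zero_add]
    exact mul_ne_zero hcos hE
  have hderiv := ((((hasDerivAt_const (0 : ℝ) N).fun_div hcosDeriv hden).sub_const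
    (N / (Real.cos b3r * Er))).const_mul vb)
  rw [hgN]
  refine hderiv.congr_deriv ?_
  have hL2' : L2 ≠ 0 := hL2.ne'
  have hNL : ur * L2 + ur * M1 * Real.cos b2r - Real.sin b2r = L2 * N := by
    rw [hN]
    field_simp
    ring
  rw [hNL, zero_add, Real.tan_eq_sin_div_cos]
  field_simp
  ring
end

section
/- The partial derivative of the third component f̃₃ of the spatial path-following error model with respect to the control ũ, evaluated at (x̃, ũ) = (0, 0), equals −v̄ · M₁ / (L₂ cos β₃ᵣ · Eᵣ²). -/
/-!
At zero error state, `g` is an affine image of the quotient `N / D` of two affine functions of the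
control, `N u = sin β₂ᵣ - M₁ cos β₂ᵣ (u + uᵣ)` and
`D u = L₂ cos β₃ᵣ (cos β₂ᵣ + M₁ (u + uᵣ) sin β₂ᵣ)`. By the quotient rule the result reduces to
`N' D - N D' = -L₂ cos β₃ᵣ M₁ (sin² β₂ᵣ + cos² β₂ᵣ) = -L₂ cos β₃ᵣ M₁`, while
`D 0 = L₂ cos β₃ᵣ Eᵣ ≠ 0`.
-/

/-- ∂f̃₃/∂ũ at the origin equals −v̄·M₁/(L₂ cos β₃ᵣ Eᵣ²). -/
theorem stmt_16
    (L2 L3 M1 vb b2r b3r ur : ℝ)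
    (hL2 : 0 < L2) (hL3 : 0 < L3)
    (hvb : vb = 1 ∨ vb = -1)
    (C1 : ℝ → ℝ → ℝ → ℝ)
    (hC1 : ∀ β2 β3 u, C1 β2 β3 u = Real.cos β3 * (Real.cos β2 + M1 * u * Real.sin β2))
    (κ : ℝ) (hκ : κ = Real.tan b3r / L3)
    (Er : ℝ) (hEr : Er = Real.cos b2r + M1 * ur * Real.sin b2r)
    (hcos : Real.cos b3r ≠ 0) (hE : Er ≠ 0)
    (g : ℝ → ℝ)
    -- f̃₃ as a function of the control deviation ũ alone, the error state being zero:
    (hg : ∀ u, g u = vb * ( ((1 - κ * 0) / Real.cos 0) *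
        ( (Real.sin (0 + b2r) - M1 * Real.cos (0 + b2r) * (u + ur)) /
            (L2 * C1 (0 + b2r) (0 + b3r) (u + ur)) -
          Real.tan (0 + b3r) / L3 )
      - ( (Real.sin b2r - M1 * Real.cos b2r * ur) / (L2 * C1 b2r b3r ur) - κ ) )) :
    HasDerivAt g
      (-vb * M1 / (L2 * Real.cos b3r * Er ^ 2)) 0 := by
  have hid : HasDerivAt (fun u : ℝ => u + ur) 1 0 := (hasDerivAt_id 0).add_const ur
  have hN : HasDerivAt (fun u : ℝ => Real.sin b2r - M1 * Real.cos b2r * (u + ur))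
      (-(M1 * Real.cos b2r * 1)) 0 := (hid.const_mul _).const_sub _
  have hD : HasDerivAt
      (fun u : ℝ => L2 * (Real.cos b3r * (Real.cos b2r + M1 * (u + ur) * Real.sin b2r)))
      (L2 * (Real.cos b3r * (M1 * 1 * Real.sin b2r))) 0 :=
    ((((hid.const_mul M1).mul_const _).const_add _).const_mul _).const_mul _
  have hD0 : L2 * (Real.cos b3r * (Real.cos b2r + M1 * (0 + ur) * Real.sin b2r)) ≠ 0 := by
    rw [zero_add, ← hEr]
    exact mul_ne_zero hL2.ne' (mul_ne_zero hcos hE)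
  have hQ := (((((hN.fun_div hD hD0).sub_const (Real.tan b3r / L3)).const_mul
    ((1 - κ * 0) / Real.cos 0)).sub_const
    ((Real.sin b2r - M1 * Real.cos b2r * ur) / (L2 * (Real.cos b3r * (Real.cos b2r + M1 * ur * Real.sin b2r))) - κ)).const_mul vb)
  have hgf := funext hg
  simp only [hC1, zero_add b2r, zero_add b3r] at hgf
  rw [hgf]
  refine hQ.congr_deriv ?_
  have hnum : -(M1 * Real.cos b2r * 1) *
        (L2 * (Real.cos b3r * (Real.cos b2r + M1 * (0 + ur) * Real.sin b2r))) -
      (Real.sin b2r - M1 * Real.cos b2r * (0 + ur)) *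
        (L2 * (Real.cos b3r * (M1 * 1 * Real.sin b2r))) = -(L2 * Real.cos b3r * M1) := by
    linear_combination (-(L2 * Real.cos b3r * M1)) * Real.sin_sq_add_cos_sq b2r
  rw [hnum, zero_add, ← hEr, Real.cos_zero]
  have hL2' := hL2.ne'
  field_simp
  ring
end

section
/- The partial derivative of the fourth component f̃₄ of the spatial path-following error model with respect to the control ũ, evaluated at (x̃, ũ) = (0, 0), equals v̄ · (M₁ + L₂ cos β₂ᵣ) / (L₂ cos β₃ᵣ · Eᵣ²). -/
/-!
At zero error state, `f̃₄` is, up to a constant, `v̄` times a quotient of two functions affine in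
the control, with nonvanishing denominator `cos β₃ᵣ * Eᵣ` at the origin. The quotient rule gives
the derivative, and `sin² + cos² = 1` brings it to the closed form.
-/

/-- ∂f̃₄/∂ũ at the origin equals v̄·(M₁ + L₂ cos β₂ᵣ)/(L₂ cos β₃ᵣ Eᵣ²). -/
theorem stmt_17
    (L2 L3 M1 vb b2r b3r ur : ℝ)
    (hL2 : 0 < L2) (hL3 : 0 < L3)
    (hvb : vb = 1 ∨ vb = -1)
    (C1 : ℝ → ℝ → ℝ → ℝ)
    (hC1 : ∀ β2 β3 u, C1 β2 β3 u = Real.cos β3 * (Real.cos β2 + M1 * u * Real.sin β2))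
    (κ : ℝ) (hκ : κ = Real.tan b3r / L3)
    (Er : ℝ) (hEr : Er = Real.cos b2r + M1 * ur * Real.sin b2r)
    (hcos : Real.cos b3r ≠ 0) (hE : Er ≠ 0)
    (g : ℝ → ℝ)
    -- f̃₄ as a function of the control deviation ũ alone, the error state being zero:
    (hg : ∀ u, g u = vb * ( ((1 - κ * 0) / Real.cos 0) *
        ( ((u + ur) - Real.sin (0 + b2r) / L2 +
            (M1 / L2) * Real.cos (0 + b2r) * (u + ur)) /
          C1 (0 + b2r) (0 + b3r) (u + ur) )
      - ( (ur - Real.sin b2r / L2 + (M1 / L2) * Real.cos b2r * ur) /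
          C1 b2r b3r ur ) )) :
    HasDerivAt g
      (vb * (M1 + L2 * Real.cos b2r) / (L2 * Real.cos b3r * Er ^ 2)) 0 := by
  have hgf : g = fun u => vb * (((u + ur) - Real.sin b2r / L2 +
            (M1 / L2) * Real.cos b2r * (u + ur)) /
          (Real.cos b3r * (Real.cos b2r + M1 * (u + ur) * Real.sin b2r))
      - (ur - Real.sin b2r / L2 + (M1 / L2) * Real.cos b2r * ur) / C1 b2r b3r ur) := by
    funext u
    rw [hg, hC1 (0 + b2r)]
    simp only [zero_add, mul_zero, sub_zero, Real.cos_zero, div_one, one_mul]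
  have hu : HasDerivAt (fun u : ℝ => u + ur) 1 0 := (hasDerivAt_id 0).add_const ur
  have hN : HasDerivAt (fun u : ℝ => (u + ur) - Real.sin b2r / L2 +
      (M1 / L2) * Real.cos b2r * (u + ur)) (1 + (M1 / L2) * Real.cos b2r * 1) 0 :=
    (hu.sub_const _).add (hu.const_mul _)
  have hD : HasDerivAt (fun u : ℝ => Real.cos b3r *
      (Real.cos b2r + M1 * (u + ur) * Real.sin b2r))
      (Real.cos b3r * (M1 * 1 * Real.sin b2r)) 0 :=
    (((hu.const_mul M1).mul_const _).const_add _).const_mul _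
  have hD0 : Real.cos b3r * (Real.cos b2r + M1 * (0 + ur) * Real.sin b2r) ≠ 0 := by
    rw [zero_add, ← hEr]
    exact mul_ne_zero hcos hE
  rw [hgf]
  refine (((hN.div hD hD0).sub_const _).const_mul vb).congr_deriv ?_
  have hL : L2 ≠ 0 := hL2.ne'
  simp only [zero_add, ← hEr]
  field_simp
  -- In the quotient-rule numerator the terms in `ur` cancel, and the remaining
  -- `M1 * (cos² + sin²)` collapses to `M1`.
  rw [hEr]
  linear_combination vb * M1 * Real.sin_sq_add_cos_sq b2r
end
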